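/- Let Σ ⊂ ℝ³ be a compact embedded minimal surface contained in the slab {|x₃| ≤ 2β_A h}. Let p, q be points in the plane {x₃ = 0} with T_h(γ_{p,q}) ∩ ∂Σ = ∅, where γ_{p,q} is the line segment from p to q and T_h denotes the tubular neighborhood of radius h. If y_p ∈ B_{h/4}(p) ∩ Σ, then there is a connected curve ν ⊂ T_h(γ_{p,q}) ∩ Σ joining y_p to a point of B_{h/4}(q) ∩ Σ. -/

import Mathlib

open Real Set Pointwise Metric

noncomputable section

abbrev R3 := EuclideanSpace ℝ (Fin 3)
abbrev R2 := EuclideanSpace ℝ (Fin 2)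

/-- The point `(a, b, c) ∈ ℝ³`. -/
def toR3 (a b c : ℝ) : R3 := (WithLp.equiv 2 (Fin 3 → ℝ)).symm ![a, b, c]

/-- Vertical projection `Π : ℝ³ → ℝ²`. -/
def pr (x : R3) : R2 := (WithLp.equiv 2 (Fin 2 → ℝ)).symm ![x 0, x 1]

/-- The `i`-th coordinate direction of `ℝ²`. -/
def e2 (i : Fin 2) : R2 := EuclideanSpace.single i 1

/-- `u` satisfies the minimal surface equation
`(1 + u_y²) u_xx − 2 u_x u_y u_xy + (1 + u_x²) u_yy = 0` on `Ω`, and is `C²` there. -/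
def SatisfiesMSE (u : R2 → ℝ) (Ω : Set R2) : Prop :=
  ∀ p ∈ Ω, ContDiffAt ℝ 2 u p ∧
    (1 + fderiv ℝ u p (e2 1) ^ 2) * fderiv ℝ (fun q => fderiv ℝ u q (e2 0)) p (e2 0)
      - 2 * fderiv ℝ u p (e2 0) * fderiv ℝ u p (e2 1) *
          fderiv ℝ (fun q => fderiv ℝ u q (e2 0)) p (e2 1)
      + (1 + fderiv ℝ u p (e2 0) ^ 2) *
          fderiv ℝ (fun q => fderiv ℝ u q (e2 1)) p (e2 1) = 0

/-- `S` is a minimal surface with boundary `bd`: near every non-boundary point, after a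
rigid rotation, `S` coincides with the graph of a solution of the minimal surface
equation. -/
def IsMinimalSurface (S bd : Set R3) : Prop :=
  bd ⊆ S ∧ ∀ z ∈ S \ bd, ∃ (Q : R3 ≃ₗᵢ[ℝ] R3) (ε : ℝ) (u : R2 → ℝ), 0 < ε ∧
    SatisfiesMSE u (ball (pr (Q z)) ε) ∧
    (Q '' S) ∩ {x : R3 | dist (pr x) (pr (Q z)) < ε ∧ |x 2 - (Q z) 2| < ε} =
      {x : R3 | pr x ∈ ball (pr (Q z)) ε ∧ x = toR3 (x 0) (x 1) (u (pr x)) ∧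
        |x 2 - (Q z) 2| < ε}

/-- `S` is graphical at `z`: near `z` it lies on the graph of a differentiable function
of `(x₁, x₂)`; equivalently the tangent plane at `z` is not vertical. -/
def GraphicalAt (S : Set R3) (z : R3) : Prop :=
  ∃ ε > 0, ∃ u : R2 → ℝ, DifferentiableOn ℝ u (ball (pr z) ε) ∧
    ∀ x ∈ S ∩ ball z ε, x 2 = u (pr x)

/-- The unique positive solution `t₀` of `cosh t = t · sinh t`. -/
def tcrit : ℝ := sInf {t | 0 < t ∧ Real.cosh t ≤ t * Real.sinh t}

/-- `sin² θ₀` for the critical catenoid cone angle `θ₀`. -/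
def sinSqθ₀ : ℝ := tcrit ^ 2 / (tcrit ^ 2 + Real.cosh tcrit ^ 2)

/-- The middle portion of the unit vertical catenoid centered at `y`. -/
def Cat0At (y : R3) : Set R3 :=
  {x | Real.cosh (x 2 - y 2) ^ 2 = (x 0 - y 0) ^ 2 + (x 1 - y 1) ^ 2 ∧
    |x 2 - y 2| < tcrit}

/-- The open solid double cone `N_{θ₀}(y)` of critical angle centered at `y`. -/
def Ncone (y : R3) : Set R3 := {x | x ≠ y ∧ (x 2 - y 2) ^ 2 < dist x y ^ 2 * sinSqθ₀}

/-- The catenoid-foliation function `f_y` centered at `y`: `y + (x−y)/f_y(x) ∈ Cat₀(y)`. -/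
def fCat (y x : R3) : ℝ := sInf {l | 0 < l ∧ y + l⁻¹ • (x - y) ∈ Cat0At y}

/-- The open tubular neighborhood of radius `r` of a set. -/
def Tub (r : ℝ) {α : Type*} [PseudoEMetricSpace α] (s : Set α) : Set α :=
  Metric.thickening r s


open Filter Topology

lemma second_order_min (f : ℝ → ℝ) (h2 : ContDiffAt ℝ 2 f 0) (hm : IsLocalMin f 0) :
    deriv f 0 = 0 ∧ 0 ≤ deriv (deriv f) 0 := by
  refine ⟨hm.deriv_eq_zero, ?_⟩
  by_contra hneg
  push Not at hneg
  have hmax := isLocalMax_of_deriv_deriv_neg hneg hm.deriv_eq_zero h2.continuousAt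
  have hc : f =ᶠ[𝓝 0] fun _ => f 0 := by
    filter_upwards [hm, hmax] with x h1 h2
    exact le_antisymm h2 h1
  have := hc.deriv.deriv_eq
  simp at this
  linarith

lemma one_dim (U : ℝ → ℝ) (hU : ContDiffAt ℝ 2 U 0) (v0 v1 v2 n0 n1 n2 a b : ℝ)
    (hm : IsLocalMin (fun t : ℝ => (v0 + t * a) ^ 2 + (v1 + t * b) ^ 2 + (v2 + (U t - U 0)) ^ 2
      - 3 * (n0 * (v0 + t * a) + n1 * (v1 + t * b) + n2 * (v2 + (U t - U 0))) ^ 2) 0) :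
    (v0 * a + v1 * b + v2 * deriv U 0
      - 3 * (n0 * v0 + n1 * v1 + n2 * v2) * (n0 * a + n1 * b + n2 * deriv U 0) = 0) ∧
    0 ≤ a ^ 2 + b ^ 2 + deriv U 0 ^ 2 - 3 * (n0 * a + n1 * b + n2 * deriv U 0) ^ 2
      + (v2 - 3 * (n0 * v0 + n1 * v1 + n2 * v2) * n2) * deriv (deriv U) 0 := by
  set f := (fun t : ℝ => (v0 + t * a) ^ 2 + (v1 + t * b) ^ 2 + (v2 + (U t - U 0)) ^ 2
      - 3 * (n0 * (v0 + t * a) + n1 * (v1 + t * b) + n2 * (v2 + (U t - U 0))) ^ 2) with hf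
  have hfc : ContDiffAt ℝ 2 f 0 := by
    rw [hf]; fun_prop
  obtain ⟨h1, h2⟩ := second_order_min f hfc hm
  have hev : ∀ᶠ t in 𝓝 (0:ℝ), DifferentiableAt ℝ U t := by
    filter_upwards [hU.eventually (by simp)] with t ht
    exact ht.differentiableAt (by simp)
  have hd : ∀ t, DifferentiableAt ℝ U t → deriv f t =
      2 * (v0 + t * a) * a + 2 * (v1 + t * b) * b + 2 * (v2 + (U t - U 0)) * deriv U t
      - 6 * (n0 * (v0 + t * a) + n1 * (v1 + t * b) + n2 * (v2 + (U t - U 0))) *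
        (n0 * a + n1 * b + n2 * deriv U t) := by
    intro t ht
    have hu := ht.hasDerivAt
    have ha : HasDerivAt (fun t : ℝ => v0 + t * a) a t := by
      simpa using ((hasDerivAt_id t).mul_const a).const_add v0
    have hb : HasDerivAt (fun t : ℝ => v1 + t * b) b t := by
      simpa using ((hasDerivAt_id t).mul_const b).const_add v1
    have hc : HasDerivAt (fun t : ℝ => v2 + (U t - U 0)) (deriv U t) t := by
      simpa using (hu.sub_const (U 0)).const_add v2
    have := (((ha.pow 2).add (hb.pow 2)).add (hc.pow 2)).sub
      (((((ha.const_mul n0).add (hb.const_mul n1)).add (hc.const_mul n2)).pow 2).const_mul 3)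
    refine (HasDerivAt.deriv (f := f) (this)).trans ?_
    simp only [Pi.add_apply]
    push_cast
    ring
  have hU0 : DifferentiableAt ℝ U 0 := hU.differentiableAt (by simp)
  have hdd : deriv (deriv f) 0 = 2 * (a ^ 2 + b ^ 2 + deriv U 0 ^ 2 - 3 * (n0 * a + n1 * b + n2 * deriv U 0) ^ 2
      + (v2 - 3 * (n0 * v0 + n1 * v1 + n2 * v2) * n2) * deriv (deriv U) 0) := by
    have he : deriv f =ᶠ[𝓝 0] fun t => 
      2 * (v0 + t * a) * a + 2 * (v1 + t * b) * b + 2 * (v2 + (U t - U 0)) * deriv U t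
      - 6 * (n0 * (v0 + t * a) + n1 * (v1 + t * b) + n2 * (v2 + (U t - U 0))) *
        (n0 * a + n1 * b + n2 * deriv U t) := by
      filter_upwards [hev] with t ht using hd t ht
    rw [he.deriv_eq]
    have hu := hU0.hasDerivAt
    have hu2 : HasDerivAt (deriv U) (deriv (deriv U) 0) 0 := by
      apply DifferentiableAt.hasDerivAt
      have : ContDiffAt ℝ 1 (deriv U) 0 := by
        have := hU.fderiv_right (m := 1) (by norm_num)
        exact this.clm_apply contDiffAt_const
      exact this.differentiableAt (by simp)
    have ha : HasDerivAt (fun t : ℝ => v0 + t * a) a 0 := by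
      simpa using ((hasDerivAt_id (0:ℝ)).mul_const a).const_add v0
    have hb : HasDerivAt (fun t : ℝ => v1 + t * b) b 0 := by
      simpa using ((hasDerivAt_id (0:ℝ)).mul_const b).const_add v1
    have hc : HasDerivAt (fun t : ℝ => v2 + (U t - U 0)) (deriv U 0) 0 := by
      simpa using (hu.sub_const (U 0)).const_add v2
    have := (((((ha.const_mul 2).mul_const a).add ((hb.const_mul 2).mul_const b)).add
      ((hc.const_mul 2).mul hu2))).sub
      (((((ha.const_mul n0).add (hb.const_mul n1)).add (hc.const_mul n2)).const_mul 6).mul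
        ((hu2.const_mul n2).const_add (n0 * a + n1 * b)))
    refine (HasDerivAt.deriv this).trans ?_
    simp only [Pi.add_apply]
    ring
  have h1' := hd 0 hU0
  constructor
  · rw [h1] at h1'
    simp at h1'
    linarith
  · linarith

lemma alg_key (v0 v1 v2 n0 n1 n2 u1 u2 h00 h10 h11 : ℝ) (hn : n0 ^ 2 + n1 ^ 2 + n2 ^ 2 = 1)
    (hE : (1 + u2 ^ 2) * h00 - 2 * u1 * u2 * h10 + (1 + u1 ^ 2) * h11 = 0)
    (k1 : v0 + v2 * u1 - 3 * (n0 * v0 + n1 * v1 + n2 * v2) * (n0 + n2 * u1) = 0)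
    (k3 : v1 + v2 * u2 - 3 * (n0 * v0 + n1 * v1 + n2 * v2) * (n1 + n2 * u2) = 0)
    (k2 : 0 ≤ 1 + u1 ^ 2 - 3 * (n0 + n2 * u1) ^ 2
      + (v2 - 3 * (n0 * v0 + n1 * v1 + n2 * v2) * n2) * h00)
    (k4 : 0 ≤ 1 + u2 ^ 2 - 3 * (n1 + n2 * u2) ^ 2
      + (v2 - 3 * (n0 * v0 + n1 * v1 + n2 * v2) * n2) * h11)
    (k6 : 0 ≤ u2 ^ 2 + u1 ^ 2 - 3 * (n0 * u2 - n1 * u1) ^ 2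
      + (v2 - 3 * (n0 * v0 + n1 * v1 + n2 * v2) * n2) *
        (u2 ^ 2 * h00 - 2 * u1 * u2 * h10 + u1 ^ 2 * h11)) :
    v0 ^ 2 + v1 ^ 2 + v2 ^ 2 ≤ 9 * (n0 * v0 + n1 * v1 + n2 * v2) ^ 2 := by
  set m := n0 * v0 + n1 * v1 + n2 * v2 with hmdef
  set b2 := v2 - 3 * m * n2 with hb2
  have e0 : v0 - 3 * m * n0 = - b2 * u1 := by rw [hb2]; linarith
  have e1 : v1 - 3 * m * n1 = - b2 * u2 := by rw [hb2]; linarith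
  have hN : 1 + u1 ^ 2 + u2 ^ 2 ≤ 3 * (n2 - n0 * u1 - n1 * u2) ^ 2 := by
    have hs : 3 * (n2 - n0 * u1 - n1 * u2) ^ 2 - (1 + u1 ^ 2 + u2 ^ 2) =
        (1 + u1 ^ 2 - 3 * (n0 + n2 * u1) ^ 2 + b2 * h00) +
        (1 + u2 ^ 2 - 3 * (n1 + n2 * u2) ^ 2 + b2 * h11) +
        (u2 ^ 2 + u1 ^ 2 - 3 * (n0 * u2 - n1 * u1) ^ 2 + 
          b2 * (u2 ^ 2 * h00 - 2 * u1 * u2 * h10 + u1 ^ 2 * h11)) := by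
      linear_combination (-3 * (1 + u1 ^ 2 + u2 ^ 2)) * (-1) * hn - b2 * hE
    linarith [k2, k4, k6, hs]
  have hB : b2 ^ 2 * (1 + u1 ^ 2 + u2 ^ 2) ≤ b2 ^ 2 * (3 * (n2 - n0 * u1 - n1 * u2) ^ 2) :=
    mul_le_mul_of_nonneg_left hN (sq_nonneg _)
  have hl : b2 ^ 2 * (1 + u1 ^ 2 + u2 ^ 2) =
      (v0 - 3 * m * n0) ^ 2 + (v1 - 3 * m * n1) ^ 2 + (v2 - 3 * m * n2) ^ 2 := by
    rw [e0, e1, ← hb2]; ring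
  have hr : b2 ^ 2 * (3 * (n2 - n0 * u1 - n1 * u2) ^ 2) = 3 * (n0 * (v0 - 3 * m * n0)
      + n1 * (v1 - 3 * m * n1) + n2 * (v2 - 3 * m * n2)) ^ 2 := by
    rw [e0, e1, ← hb2]; ring
  have hr2 : n0 * (v0 - 3 * m * n0)
      + n1 * (v1 - 3 * m * n1) + n2 * (v2 - 3 * m * n2) = -2 * m := by
    linear_combination (-3 * m) * hn - hmdef
  have hl2 : (v0 - 3 * m * n0) ^ 2 + (v1 - 3 * m * n1) ^ 2 + (v2 - 3 * m * n2) ^ 2 =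
      v0 ^ 2 + v1 ^ 2 + v2 ^ 2 + 3 * m ^ 2 := by
    linear_combination (9 * m ^ 2) * hn + 6 * m * hmdef
  rw [hl, hr, hr2, hl2] at hB
  linarith

lemma two_dim (u : R2 → ℝ) (s0 : R2) (hu : ContDiffAt ℝ 2 u s0)
    (hE : (1 + fderiv ℝ u s0 (e2 1) ^ 2) * fderiv ℝ (fun q => fderiv ℝ u q (e2 0)) s0 (e2 0)
      - 2 * fderiv ℝ u s0 (e2 0) * fderiv ℝ u s0 (e2 1) *
          fderiv ℝ (fun q => fderiv ℝ u q (e2 0)) s0 (e2 1)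
      + (1 + fderiv ℝ u s0 (e2 0) ^ 2) *
          fderiv ℝ (fun q => fderiv ℝ u q (e2 1)) s0 (e2 1) = 0)
    (v0 v1 v2 n0 n1 n2 : ℝ) (hn : n0 ^ 2 + n1 ^ 2 + n2 ^ 2 = 1)
    (hm : IsLocalMin (fun s : R2 => (v0 + (s 0 - s0 0)) ^ 2 + (v1 + (s 1 - s0 1)) ^ 2
      + (v2 + (u s - u s0)) ^ 2
      - 3 * (n0 * (v0 + (s 0 - s0 0)) + n1 * (v1 + (s 1 - s0 1)) + n2 * (v2 + (u s - u s0))) ^ 2)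
      s0) :
    v0 ^ 2 + v1 ^ 2 + v2 ^ 2 ≤ 9 * (n0 * v0 + n1 * v1 + n2 * v2) ^ 2 := by
  have hd1 : ContDiffAt ℝ 1 (fderiv ℝ u) s0 := hu.fderiv_right (by norm_num)
  have hd1' : DifferentiableAt ℝ (fderiv ℝ u) s0 := hd1.differentiableAt (by simp)
  have hev : ∀ᶠ s in 𝓝 s0, DifferentiableAt ℝ u s := by
    filter_upwards [hu.eventually (by simp)] with t ht
    exact ht.differentiableAt (by simp)
  set H := fderiv ℝ (fderiv ℝ u) s0 with hH
  have hpart : ∀ d e : R2, fderiv ℝ (fun q => fderiv ℝ u q d) s0 e = H e d := by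
    intro d e
    have := (hd1'.hasFDerivAt.clm_apply (hasFDerivAt_const d s0)).fderiv
    rw [this]
    simp [hH]
  have hsymm : H (e2 0) (e2 1) = H (e2 1) (e2 0) :=
    (hu.isSymmSndFDerivAt (by simp)) (e2 0) (e2 1)
  have key : ∀ a b : ℝ, 
      (v0 * a + v1 * b + v2 * fderiv ℝ u s0 (a • e2 0 + b • e2 1)
      - 3 * (n0 * v0 + n1 * v1 + n2 * v2) *
        (n0 * a + n1 * b + n2 * fderiv ℝ u s0 (a • e2 0 + b • e2 1)) = 0) ∧
    0 ≤ a ^ 2 + b ^ 2 + fderiv ℝ u s0 (a • e2 0 + b • e2 1) ^ 2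
      - 3 * (n0 * a + n1 * b + n2 * fderiv ℝ u s0 (a • e2 0 + b • e2 1)) ^ 2
      + (v2 - 3 * (n0 * v0 + n1 * v1 + n2 * v2) * n2) *
        H (a • e2 0 + b • e2 1) (a • e2 0 + b • e2 1) := by
    intro a b
    set ξ : R2 := a • e2 0 + b • e2 1 with hξ
    have hξ0 : ξ 0 = a := by simp [hξ, e2]
    have hξ1 : ξ 1 = b := by simp [hξ, e2]
    let l : ℝ → R2 := fun t => s0 + t • ξ
    have hl0 : l 0 = s0 := by simp [l]
    have hlc : ContDiff ℝ 2 l := by fun_prop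
    have hld : ∀ t, HasDerivAt l ξ t := by
      intro t
      have h0 := ((hasDerivAt_id t).smul_const ξ).const_add s0
      rw [one_smul] at h0
      exact h0
    have hlt : Tendsto l (𝓝 0) (𝓝 s0) := by
      have := hlc.continuous.tendsto 0
      rwa [hl0] at this
    have hUc : ContDiffAt ℝ 2 (fun t => u (l t)) 0 := by
      apply ContDiffAt.comp (g := u) (0:ℝ) (by rw [hl0]; exact hu) hlc.contDiffAt
    have hdU : deriv (fun t => u (l t)) =ᶠ[𝓝 0] fun t => fderiv ℝ u (l t) ξ := by
      filter_upwards [hlt.eventually hev] with t ht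
      exact (ht.hasFDerivAt.comp_hasDerivAt t (hld t)).deriv
    have hdU0 : deriv (fun t => u (l t)) 0 = fderiv ℝ u s0 ξ := by
      rw [hdU.eq_of_nhds, hl0]
    have hddU0 : deriv (deriv (fun t => u (l t))) 0 = H ξ ξ := by
      rw [hdU.deriv_eq]
      have h1 : HasFDerivAt (fderiv ℝ u) H (l 0) := by rw [hl0]; exact hd1'.hasFDerivAt
      have h2 := h1.comp_hasDerivAt (0:ℝ) (hld 0)
      have h3 := h2.clm_apply (hasDerivAt_const (0:ℝ) ξ)
      simpa using h3.deriv
    have := one_dim (fun t => u (l t)) hUc v0 v1 v2 n0 n1 n2 a b ?_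
    · rw [hdU0, hddU0] at this
      exact this
    · have h4 := hlt.eventually hm
      filter_upwards [h4] with t ht
      simpa [l, hξ0, hξ1] using ht
  set u1 := fderiv ℝ u s0 (e2 0) with hu1
  set u2 := fderiv ℝ u s0 (e2 1) with hu2
  rw [hpart, hpart, hpart] at hE
  obtain ⟨k1, k2⟩ := key 1 0
  obtain ⟨k3, k4⟩ := key 0 1
  obtain ⟨-, k6⟩ := key u2 (-u1)
  simp only [map_add, map_smul, one_smul, zero_smul, add_zero, zero_add, smul_eq_mul,
    _root_.add_apply, _root_.smul_apply, ← hu1, ← hu2,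
    mul_one, mul_zero, hsymm] at k1 k2 k3 k4 k6
  exact alg_key v0 v1 v2 n0 n1 n2 u1 u2 (H (e2 0) (e2 0)) (H (e2 1) (e2 0)) (H (e2 1) (e2 1)) hn
    (by linarith) (by linarith) (by linarith) (by linarith) (by linarith)
    (by
      have hz : fderiv ℝ u s0 (u2 • e2 0 + -u1 • e2 1) = 0 := by
        simp only [map_add, map_smul, smul_eq_mul, ← hu1, ← hu2]; ring
      nlinarith [k6])

/-- The graph parametrization. -/
def gr (u : R2 → ℝ) (s : R2) : R3 := toR3 (s 0) (s 1) (u s)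

lemma gr_zero (u : R2 → ℝ) (s : R2) : gr u s 0 = s 0 := by simp [gr, toR3]
lemma gr_one (u : R2 → ℝ) (s : R2) : gr u s 1 = s 1 := by simp [gr, toR3]
lemma gr_two (u : R2 → ℝ) (s : R2) : gr u s 2 = u s := by simp [gr, toR3]
lemma pr_zero (x : R3) : pr x 0 = x 0 := by simp [pr]
lemma pr_one (x : R3) : pr x 1 = x 1 := by simp [pr]

lemma pr_gr (u : R2 → ℝ) (s : R2) : pr (gr u s) = s := by
  ext i
  fin_cases i
  · exact (pr_zero _).trans (gr_zero u s)
  · exact (pr_one _).trans (gr_one u s)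

lemma continuous_pr : Continuous pr := by
  unfold pr
  refine (PiLp.continuous_toLp 2 _).comp ?_
  refine continuous_pi fun i => ?_
  fin_cases i <;> simp <;> fun_prop

lemma continuousAt_gr {u : R2 → ℝ} {s : R2} (hu : ContinuousAt u s) : ContinuousAt (gr u) s := by
  unfold gr toR3
  refine (PiLp.continuous_toLp 2 _).continuousAt.comp ?_
  refine continuousAt_pi.2 fun i => ?_
  fin_cases i <;> simp <;> fun_prop

lemma chart {S bd : Set R3} (hmin : IsMinimalSurface S bd) {z : R3} (hz : z ∈ S \ bd) :
    ∃ (Q : R3 ≃ₗᵢ[ℝ] R3) (u : R2 → ℝ) (ε : ℝ), 0 < ε ∧ SatisfiesMSE u (ball (pr (Q z)) ε) ∧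
      gr u (pr (Q z)) = Q z ∧ (∀ᶠ s in 𝓝 (pr (Q z)), Q.symm (gr u s) ∈ S) ∧
      ∀ᶠ x in 𝓝 z, x ∈ S → x = Q.symm (gr u (pr (Q x))) := by
  obtain ⟨Q, ε, u, hε, hmse, hset⟩ := hmin.2 z hz
  have hgr : ∀ x : R3, toR3 (x 0) (x 1) (u (pr x)) = gr u (pr x) := by
    intro x
    simp only [gr, pr_zero, pr_one]
  have h0 : Q z = gr u (pr (Q z)) := by
    have : Q z ∈ (Q '' S) ∩ {x : R3 | dist (pr x) (pr (Q z)) < ε ∧ |x 2 - (Q z) 2| < ε} := by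
      refine ⟨mem_image_of_mem _ hz.1, ?_, ?_⟩ <;> simp [hε]
    rw [hset] at this
    exact this.2.1.trans (hgr _)
  have hcont : ContinuousAt u (pr (Q z)) := (hmse _ (mem_ball_self hε)).1.continuousAt
  have hu0 : u (pr (Q z)) = Q z 2 := by
    rw [← gr_two u (pr (Q z)), ← h0]
  refine ⟨Q, u, ε, hε, hmse, h0.symm, ?_, ?_⟩
  · have h1 : ∀ᶠ s in 𝓝 (pr (Q z)), |u s - Q z 2| < ε := by
      have := hcont.eventually (ball_mem_nhds _ hε)
      filter_upwards [this] with s hs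
      rw [hu0] at hs
      exact hs
    filter_upwards [h1, ball_mem_nhds _ hε] with s hs1 hs2
    have : gr u s ∈ {x : R3 | pr x ∈ ball (pr (Q z)) ε ∧ x = toR3 (x 0) (x 1) (u (pr x)) ∧
        |x 2 - (Q z) 2| < ε} := by
      refine ⟨by rwa [pr_gr], ?_, by rwa [gr_two]⟩
      rw [hgr, pr_gr]
    rw [← hset] at this
    obtain ⟨x, hx, hxe⟩ := this.1
    rw [← hxe]
    simpa using hx
  · have h1 : ∀ᶠ x in 𝓝 z, dist (pr (Q x)) (pr (Q z)) < ε := by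
      have : Continuous fun x => pr (Q x) := continuous_pr.comp Q.continuous
      exact this.continuousAt.eventually (ball_mem_nhds _ hε)
    have h2 : ∀ᶠ x in 𝓝 z, |Q x 2 - Q z 2| < ε := by
      have : Continuous fun x => Q x 2 := by fun_prop
      exact this.continuousAt.eventually (ball_mem_nhds _ hε)
    filter_upwards [h1, h2] with x hx1 hx2 hxS
    have : Q x ∈ (Q '' S) ∩ {x : R3 | dist (pr x) (pr (Q z)) < ε ∧ |x 2 - (Q z) 2| < ε} :=
      ⟨mem_image_of_mem _ hxS, hx1, hx2⟩
    rw [hset] at this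
    rw [← hgr, ← this.2.1]
    simp

lemma local_joined {S bd T : Set R3} (hmin : IsMinimalSurface S bd) (hT : IsOpen T) {z : R3}
    (hz : z ∈ S \ bd) (hzT : z ∈ T) : ∀ᶠ x in 𝓝 z, x ∈ S → JoinedIn (S ∩ T) z x := by
  obtain ⟨Q, u, ε, hε, hmse, h0, h1, h2⟩ := chart hmin hz
  have hc : ∀ s ∈ ball (pr (Q z)) ε, ContinuousAt (fun s => Q.symm (gr u s)) s := fun s hs =>
    Q.symm.continuous.continuousAt.comp (continuousAt_gr (hmse s hs).1.continuousAt)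
  have h3 : ∀ᶠ s in 𝓝 (pr (Q z)), Q.symm (gr u s) ∈ T := by
    have := hc _ (mem_ball_self hε)
    apply this.eventually
    change T ∈ 𝓝 (Q.symm (gr u (pr (Q z))))
    rw [h0]
    simpa using hT.mem_nhds hzT
  obtain ⟨δ, hδ, hb⟩ := Metric.eventually_nhds_iff_ball.1 (h1.and h3)
  have hδ' : 0 < min δ ε := lt_min hδ hε
  have hpc : IsPathConnected ((fun s => Q.symm (gr u s)) '' ball (pr (Q z)) (min δ ε)) := by
    refine ((convex_ball _ _).isPathConnected ⟨_, mem_ball_self hδ'⟩).image' ?_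
    intro s hs
    exact (hc s (ball_subset_ball (min_le_right _ _) hs)).continuousWithinAt
  have h4 : ∀ᶠ x in 𝓝 z, pr (Q x) ∈ ball (pr (Q z)) (min δ ε) := by
    have : Continuous fun x => pr (Q x) := continuous_pr.comp Q.continuous
    exact this.continuousAt.eventually (ball_mem_nhds _ hδ')
  filter_upwards [h2, h4] with x hx2 hx4 hxS
  refine (hpc.joinedIn z ⟨pr (Q z), mem_ball_self hδ', by simp [h0]⟩ x
    ⟨_, hx4, (hx2 hxS).symm⟩).mono ?_
  rintro _ ⟨s, hs, rfl⟩
  exact hb s (ball_subset_ball (min_le_left _ _) hs)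

lemma norm_sq3 (x : R3) : ‖x‖ ^ 2 = x 0 ^ 2 + x 1 ^ 2 + x 2 ^ 2 := by
  rw [EuclideanSpace.norm_sq_eq, Fin.sum_univ_three]
  simp

lemma no_min {S bd : Set R3} (hmin : IsMinimalSurface S bd) {z : R3} (hz : z ∈ S \ bd) (y : R3)
    (hm : ∀ᶠ x in 𝓝 z, x ∈ S → ‖z - y‖ ^ 2 - 3 * (z 2 - y 2) ^ 2 ≤
      ‖x - y‖ ^ 2 - 3 * (x 2 - y 2) ^ 2) :
    ‖z - y‖ ^ 2 ≤ 9 * (z 2 - y 2) ^ 2 := by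
  obtain ⟨Q, u, ε, hε, hmse, h0, h1, -⟩ := chart hmin hz
  set s0 := pr (Q z) with hs0
  obtain ⟨hu, hE⟩ := hmse _ (mem_ball_self hε)
  set n : R3 := Q (EuclideanSpace.single 2 1) with hn
  have hnn : n 0 ^ 2 + n 1 ^ 2 + n 2 ^ 2 = 1 := by
    rw [← norm_sq3, hn, Q.norm_map]; simp
  have hin : ∀ x : R3, x 2 = n 0 * Q x 0 + n 1 * Q x 1 + n 2 * Q x 2 := by
    intro x
    have h5 : inner ℝ n (Q x) = inner ℝ (EuclideanSpace.single (2 : Fin 3) (1 : ℝ)) x :=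
      Q.inner_map_map _ _
    rw [EuclideanSpace.inner_single_left] at h5
    simp [PiLp.inner_apply, Fin.sum_univ_three] at h5
    linarith
  have hform : ∀ x : R3, ‖x‖ ^ 2 = Q x 0 ^ 2 + Q x 1 ^ 2 + Q x 2 ^ 2 := by
    intro x
    rw [← norm_sq3, Q.norm_map]
  set v : R3 := Q (z - y) with hv
  have hcoord : ∀ s i, Q (Q.symm (gr u s) - y) i = v i + (gr u s i - gr u s0 i) := by
    intro s i
    rw [hv, h0]
    simp
  have hF : ∀ x : R3, ‖x - y‖ ^ 2 - 3 * (x 2 - y 2) ^ 2 =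
      Q (x - y) 0 ^ 2 + Q (x - y) 1 ^ 2 + Q (x - y) 2 ^ 2 -
      3 * (n 0 * Q (x - y) 0 + n 1 * Q (x - y) 1 + n 2 * Q (x - y) 2) ^ 2 := by
    intro x
    rw [hform, ← hin]
    simp
  have hfin := two_dim u s0 hu hE (v 0) (v 1) (v 2) (n 0) (n 1) (n 2) hnn ?_
  · rw [hform (z - y), show z 2 - y 2 = (z - y) 2 by simp, hin (z - y)]
    exact hfin
  · have hc : Tendsto (fun s => Q.symm (gr u s)) (𝓝 s0) (𝓝 z) := by
      have : ContinuousAt (fun s => Q.symm (gr u s)) s0 :=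
        Q.symm.continuous.continuousAt.comp (continuousAt_gr hu.continuousAt)
      have h6 := this.tendsto
      rw [h0] at h6
      simpa using h6
    filter_upwards [hc.eventually hm, h1] with s hs hsS
    have h7 := hs hsS
    rw [hF, hF] at h7
    simp only [hcoord, gr_zero, gr_one, gr_two, ← hv] at h7
    simpa using h7

lemma beta_bound (h βA : ℝ) (hh : 0 < h) (hβA : 0 < βA)
    (hβA1 : ∀ y : R3, {x : R3 | |x 2 - y 2| ≤ 2 * βA * h} \ ball y (h / 8) ⊆ Ncone y) :
    (2 * βA * h) ^ 2 ≤ h ^ 2 / 192 := by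
  have hsin : sinSqθ₀ ≤ 1 / 3 := by
    unfold sinSqθ₀
    have hc : 1 + tcrit ^ 2 / 2 ≤ cosh tcrit := by
      have e1 : cosh tcrit = 1 + 2 * sinh (tcrit / 2) ^ 2 := by
        have e2 := Real.cosh_two_mul (tcrit / 2)
        rw [show 2 * (tcrit / 2) = tcrit by ring, Real.cosh_sq] at e2
        linarith
      have e3 : |tcrit / 2| ≤ sinh |tcrit / 2| := Real.self_le_sinh_iff.2 (abs_nonneg _)
      have e4 : |tcrit / 2| ^ 2 ≤ sinh |tcrit / 2| ^ 2 := by gcongr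
      rw [← Real.abs_sinh, sq_abs, sq_abs] at e4
      linarith
    have hpos : 0 < tcrit ^ 2 + cosh tcrit ^ 2 := by positivity
    rw [div_le_iff₀ hpos]
    nlinarith [sq_nonneg (tcrit ^ 2 / 2 - 1), sq_nonneg tcrit]
  have hB : 0 < 2 * βA * h := by positivity
  set B := 2 * βA * h
  set m := min B (h / 8) with hm
  have hm0 : 0 < m := lt_min hB (by positivity)
  have hmB : m ≤ B := min_le_left _ _
  have hmh : m ≤ h / 8 := min_le_right _ _
  have hsq : 0 ≤ (h / 8) ^ 2 - m ^ 2 := by nlinarith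
  set x : R3 := toR3 (Real.sqrt ((h / 8) ^ 2 - m ^ 2)) 0 m with hx
  have hx0 : x 0 = Real.sqrt ((h / 8) ^ 2 - m ^ 2) := by simp [hx, toR3]
  have hx1 : x 1 = 0 := by simp [hx, toR3]
  have hx2 : x 2 = m := by simp [hx, toR3]
  have hnx : ‖x‖ ^ 2 = (h / 8) ^ 2 := by
    rw [norm_sq3, hx0, hx1, hx2, Real.sq_sqrt hsq]; ring
  have hnx' : ‖x‖ = h / 8 := by
    rwa [sq_eq_sq₀ (norm_nonneg _) (by positivity)] at hnx
  have hmem : x ∈ Ncone 0 := by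
    apply hβA1 0
    refine ⟨?_, ?_⟩
    · simp [hx2, abs_of_pos hm0, hmB]
    · simp [hnx']
  have h2 := hmem.2
  rw [dist_zero_right, hnx, hx2] at h2
  simp at h2
  have h3 : m ^ 2 < h ^ 2 / 192 := by nlinarith [sq_nonneg (h / 8)]
  rcases min_choice B (h / 8) with h4 | h4
  · rw [← hm] at h4
    rw [← h4]; exact h3.le
  · rw [← hm] at h4
    rw [h4] at h3
    nlinarith

lemma step {S bd T : Set R3} (hcpt : IsCompact S) (hmin : IsMinimalSurface S bd)
    (hT : IsOpen T) (hTb : T ∩ bd = ∅) (h : ℝ) (hh : 0 < h)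
    (hslab : ∀ x ∈ S, x 2 ^ 2 ≤ h ^ 2 / 192) (yp y : R3) (hy : y 2 = 0) (hyT : ball y h ⊆ T)
    (hne : ∃ x, JoinedIn (S ∩ T) yp x ∧ dist x y < 3 * h / 4) :
    ∃ x, JoinedIn (S ∩ T) yp x ∧ dist x y < h / 4 := by
  by_contra hcon
  push Not at hcon
  have hnb : ∀ x ∈ S ∩ T, x ∈ S \ bd := fun x hx =>
    ⟨hx.1, fun hb => by
      have : x ∈ T ∩ bd := ⟨hx.2, hb⟩
      rw [hTb] at this
      exact this⟩
  set C : Set R3 := {x | JoinedIn (S ∩ T) yp x} ∩ closedBall y (7 * h / 8) with hC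
  have hsub : closedBall y (7 * h / 8) ⊆ T :=
    (closedBall_subset_ball (by linarith)).trans hyT
  have hCS : C ⊆ S := fun x hx => hx.1.target_mem.1
  have hCclosed : IsClosed C := by
    rw [← closure_subset_iff_isClosed]
    intro x hx
    have hxB : x ∈ closedBall y (7 * h / 8) :=
      isClosed_closedBall.closure_subset_iff.2 inter_subset_right hx
    have hxS : x ∈ S := hcpt.isClosed.closure_subset_iff.2 hCS hx
    have hxA : x ∈ S ∩ T := ⟨hxS, hsub hxB⟩
    have hj := local_joined hmin hT (hnb x hxA) hxA.2
    obtain ⟨w, hw1, hw2⟩ := ((mem_closure_iff_frequently.1 hx).and_eventually hj).exists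
    exact ⟨hw1.1.trans (hw2 (hCS hw1)).symm, hxB⟩
  have hCc : IsCompact C := hcpt.of_isClosed_subset hCclosed hCS
  obtain ⟨x1, hx1, hx1d⟩ := hne
  have hx1C : x1 ∈ C := ⟨hx1, by rw [mem_closedBall]; linarith⟩
  obtain ⟨z, hzC, hzmin⟩ := hCc.exists_isMinOn ⟨x1, hx1C⟩
    (f := fun x : R3 => ‖x - y‖ ^ 2 - 3 * (x 2 - y 2) ^ 2) (by fun_prop)
  have hzS := hCS hzC
  have hsl := hslab z hzS
  have hle := hzmin hx1C
  simp only [mem_ofPred_eq, hy, sub_zero] at hle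
  rw [dist_eq_norm] at hx1d
  have hn1 : ‖x1 - y‖ ^ 2 ≤ (3 * h / 4) ^ 2 := by gcongr
  have hzlt : dist z y < 7 * h / 8 := by
    rw [dist_eq_norm]
    by_contra hge
    push Not at hge
    have : (7 * h / 8) ^ 2 ≤ ‖z - y‖ ^ 2 := by gcongr
    nlinarith [sq_nonneg (x1 2)]
  have hzA := hzC.1.target_mem
  have hfin := no_min hmin (hnb z hzA) y ?_
  · have h4 := hcon z hzC.1
    rw [dist_eq_norm] at h4
    have : (h / 4) ^ 2 ≤ ‖z - y‖ ^ 2 := by gcongr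
    rw [hy, sub_zero] at hfin
    nlinarith
  · filter_upwards [local_joined hmin hT (hnb z hzA) hzA.2, isOpen_ball.mem_nhds hzlt]
      with x hx hxb hxS
    exact hzmin ⟨hzC.1.trans (hx hxS), ball_subset_closedBall hxb⟩

/-- Curve extension along a tube: for a compact embedded minimal surface in a narrow
slab, if the `h`-tube around the horizontal segment `γ_{p,q}` misses `∂S` and `S`
meets `B_{h/4}(p)` at `y_p`, then a connected curve `ν ⊆ T_h(γ_{p,q}) ∩ S` joins `y_p`
to a point of `B_{h/4}(q) ∩ S`. -/
theorem stmt15 (S bd : Set R3) (hcpt : IsCompact S) (hmin : IsMinimalSurface S bd)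
    (h βA : ℝ) (hh : 0 < h) (hβA : 0 < βA)
    (hβA1 : ∀ y : R3, {x : R3 | |x 2 - y 2| ≤ 2 * βA * h} \ ball y (h / 8) ⊆ Ncone y)
    (hβA2 : ∀ y : R3, {x : R3 | fCat y x = 3 * h / 16} ∩
      {x : R3 | |x 2 - y 2| ≤ 2 * βA * h} ⊆ ball y (7 * h / 32))
    (hslab : S ⊆ {x : R3 | |x 2| ≤ 2 * βA * h})
    (p q : R3) (hp3 : p 2 = 0) (hq3 : q 2 = 0)
    (htube : Tub h (segment ℝ p q) ∩ bd = ∅)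
    (yp : R3) (hyp : yp ∈ ball p (h / 4) ∩ S) :
    ∃ c : ℝ → R3, ContinuousOn c (Icc 0 1) ∧ c 0 = yp ∧
      c 1 ∈ ball q (h / 4) ∩ S ∧ c '' Icc 0 1 ⊆ Tub h (segment ℝ p q) ∩ S := by
  have hb := beta_bound h βA hh hβA hβA1
  set T := Tub h (segment ℝ p q) with hTdef
  have hT : IsOpen T := Metric.isOpen_thickening
  have hsl : ∀ x ∈ S, x 2 ^ 2 ≤ h ^ 2 / 192 := by
    intro x hx
    have h1 : |x 2| ≤ 2 * βA * h := hslab hx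
    have h2 : |x 2| ^ 2 ≤ (2 * βA * h) ^ 2 := by gcongr
    rw [sq_abs] at h2
    linarith
  let g : ℝ → R3 := fun t => p + t • (q - p)
  have hgseg : ∀ t, 0 ≤ t → t ≤ 1 → g t ∈ segment ℝ p q := by
    intro t h0 h1
    rw [segment_eq_image']
    exact ⟨t, ⟨h0, h1⟩, rfl⟩
  have hg2 : ∀ t, g t 2 = 0 := by
    intro t
    simp [g, hp3, hq3]
  have hgT : ∀ t, 0 ≤ t → t ≤ 1 → ball (g t) h ⊆ T := by
    intro t h0 h1 x hx
    exact Metric.mem_thickening_iff.2 ⟨g t, hgseg t h0 h1, hx⟩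
  obtain ⟨N, hN⟩ := exists_nat_gt (2 * ‖q - p‖ / h)
  have hNpos : (0 : ℝ) < N := lt_of_le_of_lt (by positivity) hN
  have hstep : ‖q - p‖ / N ≤ h / 2 := by
    rw [div_le_iff₀ hNpos]
    rw [div_lt_iff₀ hh] at hN
    linarith
  have hypT : yp ∈ T := by
    apply hgT 0 le_rfl zero_le_one
    have := hyp.1
    rw [mem_ball] at this ⊢
    simp only [g, zero_smul, add_zero]
    linarith
  have hind : ∀ k : ℕ, k ≤ N → ∃ x, JoinedIn (S ∩ T) yp x ∧ dist x (g (k / N)) < h / 4 := by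
    intro k
    induction k with
    | zero =>
      intro _
      refine ⟨yp, JoinedIn.refl ⟨hyp.2, hypT⟩, ?_⟩
      simpa [g] using hyp.1
    | succ k ih =>
      intro hk
      obtain ⟨x, hx, hxd⟩ := ih (by omega)
      have hk' : ((k + 1 : ℕ) : ℝ) ≤ N := by exact_mod_cast hk
      have hk0 : (0 : ℝ) ≤ ((k + 1 : ℕ) : ℝ) / N := by positivity
      have hk1 : ((k + 1 : ℕ) : ℝ) / N ≤ 1 := (div_le_one hNpos).2 hk'
      refine step hcpt hmin hT htube h hh hsl yp _ (hg2 _) (hgT _ hk0 hk1) ⟨x, hx, ?_⟩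
      have hdd : dist (g (k / N)) (g ((k + 1 : ℕ) / N)) = ‖q - p‖ / N := by
        have : g (k / N) - g ((k + 1 : ℕ) / N) = (-(1 / (N : ℝ))) • (q - p) := by
          simp only [g, add_sub_add_left_eq_sub, ← sub_smul]
          congr 1
          push_cast
          ring
        rw [dist_eq_norm, this, norm_smul, norm_neg, Real.norm_of_nonneg (by positivity)]
        ring
      linarith [dist_triangle x (g (k / N)) (g ((k + 1 : ℕ) / N))]
  obtain ⟨x, hx, hxd⟩ := hind N le_rfl
  have hg1 : g (N / N) = q := by
    rw [div_self hNpos.ne']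
    simp [g]
  rw [hg1] at hxd
  refine ⟨hx.somePath.extend, hx.somePath.continuous_extend.continuousOn, by simp, ?_, ?_⟩
  · rw [Path.extend_one]
    exact ⟨hxd, hx.target_mem.1⟩
  · rintro _ ⟨t, ht, rfl⟩
    rw [Path.extend_apply _ ht]
    exact ⟨(hx.somePath_mem _).2, (hx.somePath_mem _).1⟩

end
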